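/- arXiv:2307.12665 — 2 statements merged into one kernel-verified Lean document; each statement's English description precedes it below -/
import Mathlib

section
/- Let u be a regularized solution on [0,T] such that 0 < u(t,x) ≤ C₁ on [0,T] × 𝕋_L, ∫∫_{Q_T} (f_ε(u) u_xxx)² dx dt ≤ A, and |u(t,x₁) − u(t,x₂)| ≤ K |x₁ − x₂|^{1/2} for all t ∈ [0,T] and x₁, x₂. Then there exists a constant M ≥ 0, depending only on L, λ, C₁, A and K (and in particular not on ε), such that |u(t₁,x₀) − u(t₂,x₀)| ≤ M |t₁ − t₂|^{1/8} for every x₀ ∈ 𝕋_L and all t₁, t₂ ∈ [0,T] with |t₁ − t₂| ≤ 1. -/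
open MeasureTheory Set

noncomputable section

/-- The regularized mobility `f_ε(s) = s⁴ / (ε + s²)` (which also equals `0` at `s = 0`). -/
def fe (ε s : ℝ) : ℝ := s ^ 4 / (ε + s ^ 2)

/-- A regularized solution on `[0,T]`: a function `u`, smooth on `[0,T] × ℝ` and
`L`-periodic in `x`, positive everywhere, satisfying
`u_t + ∂_x(f_ε(u) ∂_x³ u) + u^λ = 0` on `[0,T] × ℝ`. -/
def IsRegSol (L T lam ε : ℝ) (u : ℝ → ℝ → ℝ) : Prop :=
  ContDiffOn ℝ (⊤ : ℕ∞) (fun p : ℝ × ℝ => u p.1 p.2)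
      (Set.Icc (0 : ℝ) T ×ˢ (Set.univ : Set ℝ)) ∧
  (∀ t x : ℝ, u t (x + L) = u t x) ∧
  (∀ t x : ℝ, 0 < u t x) ∧
  (∀ t ∈ Set.Icc (0 : ℝ) T, ∀ x : ℝ,
    derivWithin (fun s => u s x) (Set.Icc (0 : ℝ) T) t
      + deriv (fun y => fe ε (u t y) * iteratedDeriv 3 (u t) y) x
      + u t x ^ lam = 0)

/-!
Let `J = f_ε(u) u_xxx` and `h = t₂ - t₁`. Testing `u_t = -J_x - u ^ λ` on `[t₁, t₂] × [x₀, x₀ + δ]`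
against a parabola `φ` vanishing at `x₀` and `x₀ + δ` moves the `x`-derivative onto `φ`, and
Cauchy–Schwarz in space-time bounds the flux term by `√A √(h ∫ φ'²)`. Dividing by `∫ φ ~ δ³`, and
using Hölder continuity in space to replace the `φ`-weighted mean of `u(t₂) - u(t₁)` by its value at
`x₀`, one gets
`|u(t₂, x₀) - u(t₁, x₀)| ≲ √(A h / δ³) + C₁ ^ λ h + K δ ^ α`.
The choice `δ = c h ^ (1 / (2α + 3))`, where `c = min 1 L` keeps the interval within one period,
balances the first and last terms and yields the exponent `α / (2α + 3)`, which is `1/8` for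
`α = 1/2`. The mobility is never estimated, whence the uniformity in `ε`.
-/

section PartialDerivatives

variable {𝕜 E F : Type*} [NontriviallyNormedField 𝕜] [NormedAddCommGroup E] [NormedSpace 𝕜 E]
  [NormedAddCommGroup F] [NormedSpace 𝕜 F] {f : E → 𝕜 → F} {s : Set E}

lemma hasDerivAt_slice_snd (hf : DifferentiableOn 𝕜 (fun p : E × 𝕜 => f p.1 p.2) (s ×ˢ univ))
    {t : E} (ht : t ∈ s) (x : 𝕜) :
    HasDerivAt (f t) (fderivWithin 𝕜 (fun p : E × 𝕜 => f p.1 p.2) (s ×ˢ univ) (t, x) (0, 1)) x := by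
  have hline : HasDerivWithinAt (fun y : 𝕜 => (t, y)) (0, 1) univ x :=
    ((hasDerivAt_const x t).prodMk (hasDerivAt_id x)).hasDerivWithinAt
  exact hasDerivWithinAt_univ.mp <| (hf (t, x) ⟨ht, mem_univ x⟩).hasFDerivWithinAt
    |>.comp_hasDerivWithinAt x hline fun _ _ => ⟨ht, mem_univ _⟩

lemma contDiffOn_deriv_slice_snd {m n : WithTop ℕ∞} (hs : UniqueDiffOn 𝕜 s) (hmn : m + 1 ≤ n)
    (hf : ContDiffOn 𝕜 n (fun p : E × 𝕜 => f p.1 p.2) (s ×ˢ univ)) :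
    ContDiffOn 𝕜 m (fun p : E × 𝕜 => deriv (f p.1) p.2) (s ×ˢ univ) := by
  have hfd : DifferentiableOn 𝕜 (fun p : E × 𝕜 => f p.1 p.2) (s ×ˢ univ) :=
    hf.differentiableOn (by rintro rfl; simp at hmn)
  exact ((hf.fderivWithin (hs.prod uniqueDiffOn_univ) hmn).clm_apply contDiffOn_const).congr
    fun p hp => (hasDerivAt_slice_snd hfd hp.1 p.2).deriv

lemma contDiffOn_iteratedDeriv_slice_snd (hs : UniqueDiffOn 𝕜 s)
    (hf : ContDiffOn 𝕜 (⊤ : ℕ∞) (fun p : E × 𝕜 => f p.1 p.2) (s ×ˢ univ)) (n : ℕ) :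
    ContDiffOn 𝕜 (⊤ : ℕ∞) (fun p : E × 𝕜 => iteratedDeriv n (f p.1) p.2) (s ×ˢ univ) := by
  induction n with
  | zero => simpa only [iteratedDeriv_zero] using hf
  | succ n ih =>
    simp only [iteratedDeriv_succ]
    exact contDiffOn_deriv_slice_snd (f := fun t => iteratedDeriv n (f t)) hs (by simp) ih

end PartialDerivatives

lemma continuous_slice_snd {E F G : Type*} [TopologicalSpace E] [TopologicalSpace F]
    [TopologicalSpace G] {f : E → F → G} {s : Set E}
    (hf : ContinuousOn (fun p : E × F => f p.1 p.2) (s ×ˢ univ)) {t : E} (ht : t ∈ s) :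
    Continuous (f t) :=
  hf.comp_continuous (Continuous.prodMk_right t) fun x => ⟨ht, mem_univ x⟩

lemma periodic_iteratedDeriv {𝕜 F : Type*} [NontriviallyNormedField 𝕜] [NormedAddCommGroup F]
    [NormedSpace 𝕜 F] {f : 𝕜 → F} {c : 𝕜} (hf : Function.Periodic f c) (n : ℕ) :
    Function.Periodic (iteratedDeriv n f) c := fun x => by
  rw [← congrFun (iteratedDeriv_comp_add_const n f c) x, funext hf]

lemma abs_integral_mul_le_sqrt_mul_sqrt {α : Type*} {m : MeasurableSpace α} {μ : Measure α}
    {f g : α → ℝ} (hf : MemLp f 2 μ) (hg : MemLp g 2 μ) :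
    |∫ x, f x * g x ∂μ| ≤ √(∫ x, f x ^ 2 ∂μ) * √(∫ x, g x ^ 2 ∂μ) := by
  have hHolder := integral_mul_norm_le_Lp_mul_Lq (μ := μ) (f := f) (g := g)
    Real.HolderConjugate.two_two (by simpa using hf) (by simpa using hg)
  simp only [Real.norm_eq_abs, Real.rpow_two, sq_abs, ← Real.sqrt_eq_rpow, ← abs_mul] at hHolder
  exact (abs_integral_le_integral_abs).trans hHolder

section Rectangle

variable {E : Type*} [NormedAddCommGroup E] {a b c d : ℝ}

lemma integrableOn_Ioc_prod_Ioc {f : ℝ × ℝ → E} (hf : ContinuousOn f (Icc a b ×ˢ Icc c d)) :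
    IntegrableOn f (Ioc a b ×ˢ Ioc c d) :=
  (hf.integrableOn_compact (isCompact_Icc.prod isCompact_Icc)).mono_set
    (prod_mono Ioc_subset_Icc_self Ioc_subset_Icc_self)

lemma memLp_two_Ioc_prod_Ioc {f : ℝ × ℝ → ℝ} (hf : ContinuousOn f (Icc a b ×ˢ Icc c d)) :
    MemLp f 2 (volume.restrict (Ioc a b ×ˢ Ioc c d)) :=
  (memLp_two_iff_integrable_sq (integrableOn_Ioc_prod_Ioc hf).aestronglyMeasurable).mpr
    (integrableOn_Ioc_prod_Ioc (hf.pow 2))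

lemma intervalIntegral_intervalIntegral_eq_setIntegral [NormedSpace ℝ E] {f : ℝ × ℝ → E}
    (hab : a ≤ b) (hcd : c ≤ d) (hf : ContinuousOn f (Icc a b ×ˢ Icc c d)) :
    ∫ t in a..b, ∫ x in c..d, f (t, x) = ∫ p in Ioc a b ×ˢ Ioc c d, f p := by
  simp only [intervalIntegral.integral_of_le hab, intervalIntegral.integral_of_le hcd]
  exact (setIntegral_prod f (integrableOn_Ioc_prod_Ioc hf)).symm

lemma intervalIntegral_swap_of_continuousOn [NormedSpace ℝ E] {f : ℝ × ℝ → E}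
    (hab : a ≤ b) (hcd : c ≤ d) (hf : ContinuousOn f (Icc a b ×ˢ Icc c d)) :
    ∫ t in a..b, ∫ x in c..d, f (t, x) = ∫ x in c..d, ∫ t in a..b, f (t, x) := by
  refine intervalIntegral_intervalIntegral_swap (F := fun t x => f (t, x)) ?_
  rw [uIoc_of_le hab, uIoc_of_le hcd]
  exact integrableOn_Ioc_prod_Ioc hf

lemma setIntegral_Ioc_prod_Ioc_snd {φ : ℝ → ℝ} (hab : a ≤ b) (hcd : c ≤ d)
    (hφ : ContinuousOn φ (Icc c d)) :
    ∫ p in Ioc a b ×ˢ Ioc c d, φ p.2 = (b - a) * ∫ x in c..d, φ x := by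
  have hφQ : ContinuousOn (fun p : ℝ × ℝ => φ p.2) (Icc a b ×ˢ Icc c d) :=
    hφ.comp continuousOn_snd fun _ hp => hp.2
  rw [← intervalIntegral_intervalIntegral_eq_setIntegral hab hcd hφQ]
  simp only [intervalIntegral.integral_const, smul_eq_mul]

lemma abs_setIntegral_mul_snd_le_sqrt_mul_sqrt {f : ℝ × ℝ → ℝ} {φ : ℝ → ℝ} (hab : a ≤ b)
    (hcd : c ≤ d) (hf : ContinuousOn f (Icc a b ×ˢ Icc c d)) (hφ : ContinuousOn φ (Icc c d)) :
    |∫ p in Ioc a b ×ˢ Ioc c d, f p * φ p.2| ≤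
      √(∫ p in Ioc a b ×ˢ Ioc c d, f p ^ 2) * √((b - a) * ∫ x in c..d, φ x ^ 2) := by
  rw [← setIntegral_Ioc_prod_Ioc_snd (φ := fun x => φ x ^ 2) hab hcd (hφ.pow 2)]
  exact abs_integral_mul_le_sqrt_mul_sqrt (memLp_two_Ioc_prod_Ioc hf)
    (memLp_two_Ioc_prod_Ioc (hφ.comp continuousOn_snd fun _ hp => hp.2))

lemma abs_setIntegral_mul_snd_le {f : ℝ × ℝ → ℝ} {φ : ℝ → ℝ} {B : ℝ} (hab : a ≤ b) (hcd : c ≤ d)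
    (hφ : ContinuousOn φ (Icc c d)) (hφ0 : ∀ x ∈ Icc c d, 0 ≤ φ x)
    (hf : ∀ p ∈ Icc a b ×ˢ Icc c d, |f p| ≤ B) :
    |∫ p in Ioc a b ×ˢ Ioc c d, f p * φ p.2| ≤ B * (b - a) * ∫ x in c..d, φ x := by
  have hQ : Ioc a b ×ˢ Ioc c d ⊆ Icc a b ×ˢ Icc c d :=
    prod_mono Ioc_subset_Icc_self Ioc_subset_Icc_self
  have hBφ : ContinuousOn (fun p : ℝ × ℝ => B * φ p.2) (Icc a b ×ˢ Icc c d) :=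
    continuousOn_const.mul (hφ.comp continuousOn_snd fun _ hp => hp.2)
  have hbound : ∀ p ∈ Ioc a b ×ˢ Ioc c d, ‖f p * φ p.2‖ ≤ B * φ p.2 := fun p hp => by
    rw [Real.norm_eq_abs, abs_mul, abs_of_nonneg (hφ0 p.2 (hQ hp).2)]
    exact mul_le_mul_of_nonneg_right (hf p (hQ hp)) (hφ0 p.2 (hQ hp).2)
  calc |∫ p in Ioc a b ×ˢ Ioc c d, f p * φ p.2| ≤ ∫ p in Ioc a b ×ˢ Ioc c d, B * φ p.2 :=
        norm_integral_le_of_norm_le (integrableOn_Ioc_prod_Ioc hBφ)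
          ((ae_restrict_iff' (measurableSet_Ioc.prod measurableSet_Ioc)).mpr (.of_forall hbound))
    _ = B * (b - a) * ∫ x in c..d, φ x := by
        rw [integral_const_mul, setIntegral_Ioc_prod_Ioc_snd hab hcd hφ, mul_assoc]

end Rectangle

lemma abs_mul_integral_le_of_abs_sub_le {a b H w : ℝ} {v φ : ℝ → ℝ} (hab : a ≤ b)
    (hv : ContinuousOn v (Icc a b)) (hφ : ContinuousOn φ (Icc a b)) (hφ0 : ∀ x ∈ Icc a b, 0 ≤ φ x)
    (hH : ∀ x ∈ Icc a b, |w - v x| ≤ H) :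
    |w| * ∫ x in a..b, φ x ≤ |∫ x in a..b, v x * φ x| + H * ∫ x in a..b, φ x := by
  have hφi : IntervalIntegrable φ volume a b := hφ.intervalIntegrable_of_Icc hab
  have hvφ : IntervalIntegrable (fun x => v x * φ x) volume a b :=
    (hv.mul hφ).intervalIntegrable_of_Icc hab
  have hosc : |∫ x in a..b, (w - v x) * φ x| ≤ H * ∫ x in a..b, φ x := by
    rw [← intervalIntegral.integral_const_mul]
    refine intervalIntegral.norm_integral_le_of_norm_le (μ := volume)
      (f := fun x => (w - v x) * φ x) hab (.of_forall fun x hx => ?_) (hφi.const_mul H)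
    rw [Real.norm_eq_abs, abs_mul, abs_of_nonneg (hφ0 x (Ioc_subset_Icc_self hx))]
    exact mul_le_mul_of_nonneg_right (hH x (Ioc_subset_Icc_self hx))
      (hφ0 x (Ioc_subset_Icc_self hx))
  calc |w| * ∫ x in a..b, φ x = |w * ∫ x in a..b, φ x| := by
        rw [abs_mul, abs_of_nonneg (intervalIntegral.integral_nonneg hab hφ0)]
    _ = |(∫ x in a..b, v x * φ x) + ∫ x in a..b, (w - v x) * φ x| := by
        simp only [sub_mul]
        rw [intervalIntegral.integral_sub (hφi.const_mul w) hvφ, add_sub_cancel,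
          intervalIntegral.integral_const_mul]
    _ ≤ |∫ x in a..b, v x * φ x| + H * ∫ x in a..b, φ x :=
        (abs_add_le _ _).trans (add_le_add_right hosc _)

/-- The test function `(x - a) (b - x)`, which vanishes at the ends of `[a, b]`. -/
def parabola (a b x : ℝ) : ℝ := (x - a) * (b - x)

lemma parabola_nonneg {a b x : ℝ} (hx : x ∈ Icc a b) : 0 ≤ parabola a b x :=
  mul_nonneg (sub_nonneg.mpr hx.1) (sub_nonneg.mpr hx.2)

section Parabola

variable (a b : ℝ)

lemma hasDerivAt_parabola (x : ℝ) : HasDerivAt (parabola a b) (a + b - 2 * x) x := by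
  refine (((hasDerivAt_id x).sub_const a).mul ((hasDerivAt_id x).const_sub b)).congr_deriv ?_
  simp only [id]
  ring

lemma continuous_parabola : Continuous (parabola a b) :=
  continuous_iff_continuousAt.mpr fun x => (hasDerivAt_parabola a b x).continuousAt

lemma parabola_left : parabola a b a = 0 := by
  rw [parabola, sub_self, zero_mul]

lemma parabola_right : parabola a b b = 0 := by
  rw [parabola, sub_self, mul_zero]

lemma integral_parabola : ∫ x in a..b, parabola a b x = (b - a) ^ 3 / 6 := by
  have hprim : ∀ x ∈ uIcc a b, HasDerivAt
      (fun x => (b - a) * (x - a) ^ 2 / 2 - (x - a) ^ 3 / 3) (parabola a b x) x := by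
    intro x _
    have hlin := (hasDerivAt_id x).sub_const a
    refine ((((hlin.pow 2).const_mul (b - a)).div_const 2).sub
      ((hlin.pow 3).div_const 3)).congr_deriv ?_
    simp only [id, parabola]
    norm_num
    ring
  rw [intervalIntegral.integral_eq_sub_of_hasDerivAt hprim
    ((continuous_parabola a b).intervalIntegrable a b)]
  ring

lemma integral_deriv_parabola_sq : ∫ x in a..b, (a + b - 2 * x) ^ 2 = (b - a) ^ 3 / 3 := by
  rw [intervalIntegral.integral_comp_sub_mul (fun y => y ^ 2) two_ne_zero, integral_pow]
  simp only [smul_eq_mul]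
  norm_num
  ring

end Parabola

section Scale

variable {c h α : ℝ}

lemma sqrt_div_scale_pow_three (hc : 0 ≤ c) (hh : 0 < h) (hα : 0 ≤ α) :
    √(12 * h / (c * h ^ (1 / (2 * α + 3))) ^ 3) = √(12 / c ^ 3) * h ^ (α / (2 * α + 3)) := by
  have hden : 2 * α + 3 ≠ 0 := by positivity
  have hexp : h / (h ^ (1 / (2 * α + 3))) ^ 3 = (h ^ (α / (2 * α + 3))) ^ 2 := by
    rw [← Real.rpow_mul_natCast hh.le, ← Real.rpow_mul_natCast hh.le]
    nth_rw 1 [← Real.rpow_one h]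
    rw [← Real.rpow_sub hh]
    congr 1
    field_simp
    ring
  rw [mul_pow, mul_div_mul_comm, hexp, Real.sqrt_mul (by positivity),
    Real.sqrt_sq (by positivity)]

lemma scale_rpow_le (hc0 : 0 ≤ c) (hc1 : c ≤ 1) (hh : 0 ≤ h) (hα : 0 ≤ α) :
    (c * h ^ (1 / (2 * α + 3))) ^ α ≤ h ^ (α / (2 * α + 3)) := by
  rw [Real.mul_rpow hc0 (by positivity), ← Real.rpow_mul hh, one_div_mul_eq_div]
  exact mul_le_of_le_one_left (by positivity) (Real.rpow_le_one hc0 hc1 hα)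

end Scale

/-- Classical solutions of the balance law `∂ₜu + ∂ₓJ + g = 0` on `I × ℝ`, for a density `u`, a
flux `J` and a sink `g`; the time derivative is taken within `I`. -/
structure IsBalanceLaw (I : Set ℝ) (u J g : ℝ → ℝ → ℝ) : Prop where
  continuousOn_density : ContinuousOn (fun p : ℝ × ℝ => u p.1 p.2) (I ×ˢ univ)
  continuousOn_flux : ContinuousOn (fun p : ℝ × ℝ => J p.1 p.2) (I ×ˢ univ)
  continuousOn_deriv_flux : ContinuousOn (fun p : ℝ × ℝ => deriv (J p.1) p.2) (I ×ˢ univ)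
  continuousOn_sink : ContinuousOn (fun p : ℝ × ℝ => g p.1 p.2) (I ×ˢ univ)
  differentiable_flux : ∀ t ∈ I, Differentiable ℝ (J t)
  hasDerivWithinAt_density : ∀ t ∈ I, ∀ x,
    HasDerivWithinAt (fun s => u s x) (-(deriv (J t) x + g t x)) I t

namespace IsBalanceLaw

variable {I : Set ℝ} {u J g : ℝ → ℝ → ℝ} {a b t₁ t₂ : ℝ}

lemma sub_eq_integral (h : IsBalanceLaw I u J g) (hI : Icc t₁ t₂ ⊆ I) (ht : t₁ ≤ t₂) (x : ℝ) :
    u t₂ x - u t₁ x = ∫ t in t₁..t₂, -(deriv (J t) x + g t x) := by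
  have hderiv : ∀ t ∈ Icc t₁ t₂, HasDerivWithinAt (fun s => u s x) (-(deriv (J t) x + g t x))
      (Icc t₁ t₂) t := fun t ht => (h.hasDerivWithinAt_density t (hI ht) x).mono hI
  have hline : ContinuousOn (fun t : ℝ => (t, x)) (Icc t₁ t₂) := by fun_prop
  have hcont : ContinuousOn (fun t => -(deriv (J t) x + g t x)) (Icc t₁ t₂) :=
    (h.continuousOn_deriv_flux.add h.continuousOn_sink).neg.comp hline
      fun t ht => ⟨hI ht, mem_univ x⟩
  exact (intervalIntegral.integral_eq_sub_of_hasDerivAt_of_le ht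
    (HasDerivWithinAt.continuousOn hderiv)
    (fun t ht => (hderiv t (Ioo_subset_Icc_self ht)).hasDerivAt (Icc_mem_nhds ht.1 ht.2))
    (hcont.intervalIntegrable_of_Icc ht)).symm

lemma integral_deriv_flux_mul (h : IsBalanceLaw I u J g) {φ φ' : ℝ → ℝ}
    (hφ : ∀ x, HasDerivAt φ (φ' x) x) (hφ' : Continuous φ') (ha : φ a = 0) (hb : φ b = 0)
    {t : ℝ} (ht : t ∈ I) :
    ∫ x in a..b, -(deriv (J t) x + g t x) * φ x = ∫ x in a..b, (J t x * φ' x - g t x * φ x) := by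
  have hφc : Continuous φ := continuous_iff_continuousAt.mpr fun x => (hφ x).continuousAt
  have hJ := continuous_slice_snd h.continuousOn_flux ht
  have hJ' := continuous_slice_snd (f := fun t => deriv (J t)) h.continuousOn_deriv_flux ht
  have hg := continuous_slice_snd h.continuousOn_sink ht
  have hparts := intervalIntegral.integral_mul_deriv_eq_deriv_mul
    (fun x _ => (h.differentiable_flux t ht x).hasDerivAt) (fun x _ => hφ x)
    (hJ'.intervalIntegrable a b) (hφ'.intervalIntegrable a b)
  simp only [ha, hb, mul_zero, sub_zero, zero_sub] at hparts
  have hJφ' : IntervalIntegrable (fun x => J t x * φ' x) volume a b :=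
    (hJ.mul hφ').intervalIntegrable a b
  have hJ'φ : IntervalIntegrable (fun x => -(deriv (J t) x * φ x)) volume a b :=
    (hJ'.mul hφc).neg.intervalIntegrable a b
  have hgφ : IntervalIntegrable (fun x => g t x * φ x) volume a b :=
    (hg.mul hφc).intervalIntegrable a b
  calc ∫ x in a..b, -(deriv (J t) x + g t x) * φ x
      = ∫ x in a..b, (-(deriv (J t) x * φ x) - g t x * φ x) :=
        intervalIntegral.integral_congr fun x _ => by ring
    _ = ∫ x in a..b, (J t x * φ' x - g t x * φ x) := by
        rw [intervalIntegral.integral_sub hJ'φ hgφ, intervalIntegral.integral_neg, ← hparts,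
          ← intervalIntegral.integral_sub hJφ' hgφ]

theorem weak_form (h : IsBalanceLaw I u J g) (hI : Icc t₁ t₂ ⊆ I) (ht : t₁ ≤ t₂) (hab : a ≤ b)
    {φ φ' : ℝ → ℝ} (hφ : ∀ x, HasDerivAt φ (φ' x) x) (hφ' : Continuous φ')
    (ha : φ a = 0) (hb : φ b = 0) :
    ∫ x in a..b, (u t₂ x - u t₁ x) * φ x =
      ∫ p in Ioc t₁ t₂ ×ˢ Ioc a b, (J p.1 p.2 * φ' p.2 - g p.1 p.2 * φ p.2) := by
  have hφc : Continuous φ := continuous_iff_continuousAt.mpr fun x => (hφ x).continuousAt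
  have hQ : Icc t₁ t₂ ×ˢ Icc a b ⊆ I ×ˢ univ := prod_mono hI (subset_univ _)
  have hφQ : ContinuousOn (fun p : ℝ × ℝ => φ p.2) (Icc t₁ t₂ ×ˢ Icc a b) := by fun_prop
  have hφ'Q : ContinuousOn (fun p : ℝ × ℝ => φ' p.2) (Icc t₁ t₂ ×ˢ Icc a b) := by fun_prop
  calc ∫ x in a..b, (u t₂ x - u t₁ x) * φ x
      = ∫ x in a..b, ∫ t in t₁..t₂, -(deriv (J t) x + g t x) * φ x := by
        simp only [h.sub_eq_integral hI ht, intervalIntegral.integral_mul_const]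
    _ = ∫ t in t₁..t₂, ∫ x in a..b, -(deriv (J t) x + g t x) * φ x :=
        (intervalIntegral_swap_of_continuousOn ht hab
          (((h.continuousOn_deriv_flux.mono hQ).add (h.continuousOn_sink.mono hQ)).neg.mul
            hφQ)).symm
    _ = ∫ t in t₁..t₂, ∫ x in a..b, (J t x * φ' x - g t x * φ x) :=
        intervalIntegral.integral_congr fun t htt =>
          h.integral_deriv_flux_mul hφ hφ' ha hb (hI (uIcc_of_le ht ▸ htt))
    _ = _ := intervalIntegral_intervalIntegral_eq_setIntegral ht hab
        (((h.continuousOn_flux.mono hQ).mul hφ'Q).sub ((h.continuousOn_sink.mono hQ).mul hφQ))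

lemma abs_integral_sub_mul_le (h : IsBalanceLaw I u J g) (hI : Icc t₁ t₂ ⊆ I) (ht : t₁ ≤ t₂)
    (hab : a ≤ b) {φ φ' : ℝ → ℝ} (hφ : ∀ x, HasDerivAt φ (φ' x) x) (hφ' : Continuous φ')
    (ha : φ a = 0) (hb : φ b = 0) (hφ0 : ∀ x ∈ Icc a b, 0 ≤ φ x) {B : ℝ}
    (hB : ∀ t ∈ Icc t₁ t₂, ∀ x ∈ Icc a b, |g t x| ≤ B) :
    |∫ x in a..b, (u t₂ x - u t₁ x) * φ x| ≤
      √(∫ p in Ioc t₁ t₂ ×ˢ Ioc a b, J p.1 p.2 ^ 2) * √((t₂ - t₁) * ∫ x in a..b, φ' x ^ 2) +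
        B * (t₂ - t₁) * ∫ x in a..b, φ x := by
  have hφc : Continuous φ := continuous_iff_continuousAt.mpr fun x => (hφ x).continuousAt
  have hQ : Icc t₁ t₂ ×ˢ Icc a b ⊆ I ×ˢ univ := prod_mono hI (subset_univ _)
  have hJφ : IntegrableOn (fun p : ℝ × ℝ => J p.1 p.2 * φ' p.2) (Ioc t₁ t₂ ×ˢ Ioc a b) :=
    integrableOn_Ioc_prod_Ioc ((h.continuousOn_flux.mono hQ).mul (by fun_prop))
  have hgφ : IntegrableOn (fun p : ℝ × ℝ => g p.1 p.2 * φ p.2) (Ioc t₁ t₂ ×ˢ Ioc a b) :=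
    integrableOn_Ioc_prod_Ioc ((h.continuousOn_sink.mono hQ).mul (by fun_prop))
  rw [h.weak_form hI ht hab hφ hφ' ha hb, integral_sub hJφ hgφ]
  exact (abs_sub _ _).trans <| add_le_add
    (abs_setIntegral_mul_snd_le_sqrt_mul_sqrt (f := fun p => J p.1 p.2) ht hab
      (h.continuousOn_flux.mono hQ) hφ'.continuousOn)
    (abs_setIntegral_mul_snd_le (f := fun p => g p.1 p.2) ht hab hφc.continuousOn hφ0
      fun p hp => hB p.1 hp.1 p.2 hp.2)

theorem abs_sub_le (h : IsBalanceLaw I u J g) (hI : Icc t₁ t₂ ⊆ I) (ht : t₁ ≤ t₂) {δ A B H : ℝ}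
    (hδ : 0 < δ) (hA : ∫ p in Ioc t₁ t₂ ×ˢ Ioc a (a + δ), J p.1 p.2 ^ 2 ≤ A)
    (hB : ∀ t ∈ Icc t₁ t₂, ∀ x ∈ Icc a (a + δ), |g t x| ≤ B)
    (hH : ∀ t ∈ Icc t₁ t₂, ∀ x ∈ Icc a (a + δ), |u t a - u t x| ≤ H) :
    |u t₂ a - u t₁ a| ≤ √A * √(12 * (t₂ - t₁) / δ ^ 3) + B * (t₂ - t₁) + 2 * H := by
  have hab : a ≤ a + δ := by linarith
  have ht₁ := left_mem_Icc.mpr ht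
  have ht₂ := right_mem_Icc.mpr ht
  have hv : Continuous fun x => u t₂ x - u t₁ x :=
    (continuous_slice_snd h.continuousOn_density (hI ht₂)).sub
      (continuous_slice_snd h.continuousOn_density (hI ht₁))
  have hosc : ∀ x ∈ Icc a (a + δ), |(u t₂ a - u t₁ a) - (u t₂ x - u t₁ x)| ≤ 2 * H := by
    intro x hx
    rw [sub_sub_sub_comm, two_mul]
    exact (abs_sub _ _).trans (add_le_add (hH t₂ ht₂ x hx) (hH t₁ ht₁ x hx))
  have hlocal := abs_mul_integral_le_of_abs_sub_le hab hv.continuousOn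
    (continuous_parabola a (a + δ)).continuousOn (fun _ => parabola_nonneg) hosc
  have htest := h.abs_integral_sub_mul_le hI ht hab (hasDerivAt_parabola a (a + δ))
    (by fun_prop) (parabola_left _ _) (parabola_right _ _) (fun _ => parabola_nonneg) hB
  rw [integral_parabola, add_sub_cancel_left] at hlocal htest
  have hsqrt : √((t₂ - t₁) * (δ ^ 3 / 3)) = √(12 * (t₂ - t₁) / δ ^ 3) * (δ ^ 3 / 6) := by
    have hfactor : (t₂ - t₁) * (δ ^ 3 / 3) = 12 * (t₂ - t₁) / δ ^ 3 * (δ ^ 3 / 6) ^ 2 := by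
      field_simp
      ring
    rw [hfactor, Real.sqrt_mul' _ (sq_nonneg _), Real.sqrt_sq (by positivity)]
  rw [integral_deriv_parabola_sq, add_sub_cancel_left, hsqrt] at htest
  have hflux := mul_le_mul_of_nonneg_right (Real.sqrt_le_sqrt hA)
    (show 0 ≤ √(12 * (t₂ - t₁) / δ ^ 3) * (δ ^ 3 / 6) by positivity)
  refine le_of_mul_le_mul_right ?_ (show 0 < δ ^ 3 / 6 by positivity)
  linarith

theorem abs_sub_le_rpow (h : IsBalanceLaw I u J g) (hI : Icc t₁ t₂ ⊆ I) (ht : t₁ < t₂)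
    (ht1 : t₂ - t₁ ≤ 1) {c A B K α : ℝ} (hc0 : 0 < c) (hc1 : c ≤ 1) (hα : 0 ≤ α)
    (hA : ∫ p in Ioc t₁ t₂ ×ˢ Ioc a (a + c), J p.1 p.2 ^ 2 ≤ A)
    (hB : ∀ t ∈ Icc t₁ t₂, ∀ x ∈ Icc a (a + c), |g t x| ≤ B)
    (hK : ∀ t ∈ Icc t₁ t₂, ∀ x ∈ Icc a (a + c), |u t a - u t x| ≤ K * |a - x| ^ α) :
    |u t₂ a - u t₁ a| ≤ (√A * √(12 / c ^ 3) + B + 2 * K) * (t₂ - t₁) ^ (α / (2 * α + 3)) := by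
  have hh : 0 < t₂ - t₁ := sub_pos.mpr ht
  -- The scale at which `√(h / δ³)` and `δ ^ α` balance, for `h = t₂ - t₁`.
  set δ := c * (t₂ - t₁) ^ (1 / (2 * α + 3))
  have hδ0 : 0 < δ := mul_pos hc0 (Real.rpow_pos_of_pos hh _)
  have hδc : δ ≤ c := mul_le_of_le_one_right hc0.le
    (Real.rpow_le_one hh.le ht1 (by positivity))
  have hsub : Icc a (a + δ) ⊆ Icc a (a + c) := Icc_subset_Icc_right (by linarith)
  have hmem : a + c ∈ Icc a (a + c) := right_mem_Icc.mpr (by linarith)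
  have ht₁ := left_mem_Icc.mpr ht.le
  have hB0 : 0 ≤ B := (abs_nonneg _).trans (hB t₁ ht₁ _ hmem)
  have hK0 : 0 ≤ K := by
    refine nonneg_of_mul_nonneg_left ((abs_nonneg _).trans (hK t₁ ht₁ _ hmem))
      (Real.rpow_pos_of_pos (abs_pos.mpr ?_) _)
    linarith
  have hJ : ContinuousOn (fun p : ℝ × ℝ => J p.1 p.2 ^ 2) (Icc t₁ t₂ ×ˢ Icc a (a + c)) :=
    (h.continuousOn_flux.mono (prod_mono hI (subset_univ _))).pow 2
  have hAδ : ∫ p in Ioc t₁ t₂ ×ˢ Ioc a (a + δ), J p.1 p.2 ^ 2 ≤ A :=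
    (setIntegral_mono_set (integrableOn_Ioc_prod_Ioc hJ) (.of_forall fun _ => sq_nonneg _)
      (prod_mono_right (Ioc_subset_Ioc_right (by linarith))).eventuallyLE).trans hA
  have hHδ : ∀ t ∈ Icc t₁ t₂, ∀ x ∈ Icc a (a + δ), |u t a - u t x| ≤ K * δ ^ α := by
    intro t ht x hx
    refine (hK t ht x (hsub hx)).trans ?_
    have : |a - x| ≤ δ := abs_le.mpr ⟨by linarith [hx.2], by linarith [hx.1]⟩
    gcongr
  calc |u t₂ a - u t₁ a|
      ≤ √A * √(12 * (t₂ - t₁) / δ ^ 3) + B * (t₂ - t₁) + 2 * (K * δ ^ α) :=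
        h.abs_sub_le hI ht.le hδ0 hAδ (fun t ht x hx => hB t ht x (hsub hx)) hHδ
    _ ≤ √A * (√(12 / c ^ 3) * (t₂ - t₁) ^ (α / (2 * α + 3)))
        + B * (t₂ - t₁) ^ (α / (2 * α + 3)) + 2 * (K * (t₂ - t₁) ^ (α / (2 * α + 3))) := by
        gcongr
        · exact (sqrt_div_scale_pow_three hc0.le hh hα).le
        · exact Real.self_le_rpow_of_le_one hh.le ht1
            (div_le_one_of_le₀ (by linarith) (by positivity))
        · exact scale_rpow_le hc0.le hc1 hh.le hα
    _ = _ := by ring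

end IsBalanceLaw

/-- The flux `f_ε(u) ∂ₓ³u` of the regularized thin-film equation. -/
def thinFilmFlux (ε : ℝ) (u : ℝ → ℝ → ℝ) (t x : ℝ) : ℝ :=
  fe ε (u t x) * iteratedDeriv 3 (u t) x

lemma contDiff_fe {ε : ℝ} (hε : 0 < ε) {n : WithTop ℕ∞} : ContDiff ℝ n (fe ε) :=
  (contDiff_id.pow 4).div (contDiff_const.add (contDiff_id.pow 2)) fun _ => by positivity

/-- The Hölder constant in time obtained for regularized solutions: its summands come from the
flux, the sink, the oscillation in space, and the crude bound `|u(t₁) - u(t₂)| ≤ C₁` for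
`|t₁ - t₂| ≥ 1`. -/
def timeHolderConst (L lam C₁ A K : ℝ) : ℝ :=
  √A * √(12 / min 1 L ^ 3) + |C₁| ^ lam + 2 * |K| + |C₁|

lemma timeHolderConst_nonneg {L : ℝ} (hL : 0 < L) (lam C₁ A K : ℝ) :
    0 ≤ timeHolderConst L lam C₁ A K := by
  unfold timeHolderConst
  positivity

namespace IsRegSol

variable {L T lam ε : ℝ} {u : ℝ → ℝ → ℝ}

lemma contDiffOn_flux (hT : 0 < T) (hε : 0 < ε) (hu : IsRegSol L T lam ε u) :
    ContDiffOn ℝ (⊤ : ℕ∞) (fun p : ℝ × ℝ => thinFilmFlux ε u p.1 p.2) (Icc 0 T ×ˢ univ) :=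
  ((contDiff_fe hε).comp_contDiffOn hu.1).mul
    (contDiffOn_iteratedDeriv_slice_snd (uniqueDiffOn_Icc hT) hu.1 3)

lemma isBalanceLaw (hT : 0 < T) (hε : 0 < ε) (hu : IsRegSol L T lam ε u) :
    IsBalanceLaw (Icc 0 T) u (thinFilmFlux ε u) (fun t x => u t x ^ lam) := by
  have hJ := contDiffOn_flux hT hε hu
  obtain ⟨hsmooth, -, hpos, heq⟩ := hu
  refine ⟨hsmooth.continuousOn, hJ.continuousOn, ?_, ?_, ?_, ?_⟩
  · exact (contDiffOn_deriv_slice_snd (m := 0) (uniqueDiffOn_Icc hT) (by simp) hJ).continuousOn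
  · exact hsmooth.continuousOn.rpow_const fun p _ => .inl (hpos p.1 p.2).ne'
  · exact fun t ht x => (hasDerivAt_slice_snd (hJ.differentiableOn (by simp)) ht x).differentiableAt
  · intro t ht x
    have hslice : DifferentiableOn ℝ (fun s => u s x) (Icc 0 T) :=
      (hsmooth.differentiableOn (by simp)).comp (f := fun s => (s, x)) (by fun_prop)
        fun s hs => ⟨hs, mem_univ x⟩
    refine (hslice t ht).hasDerivWithinAt.congr_deriv ?_
    have := heq t ht x
    change _ + deriv (thinFilmFlux ε u t) x + _ = 0 at this
    linarith

lemma periodic_flux (hu : IsRegSol L T lam ε u) (t : ℝ) :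
    Function.Periodic (thinFilmFlux ε u t) L := fun x => by
  simp only [thinFilmFlux, hu.2.1 t x, periodic_iteratedDeriv (hu.2.1 t) 3 x]

lemma setIntegral_flux_sq_le (hT : 0 < T) (hε : 0 < ε) (hu : IsRegSol L T lam ε u) {t₁ t₂ a c : ℝ}
    (ht₁ : 0 ≤ t₁) (ht₂ : t₂ ≤ T) (hc : c ≤ L) (hL : 0 ≤ L) :
    ∫ p in Ioc t₁ t₂ ×ˢ Ioc a (a + c), thinFilmFlux ε u p.1 p.2 ^ 2 ≤
      ∫ t in (0 : ℝ)..T, ∫ x in (0 : ℝ)..L, thinFilmFlux ε u t x ^ 2 := by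
  have hcont : ContinuousOn (fun p : ℝ × ℝ => thinFilmFlux ε u p.1 p.2 ^ 2)
      (Icc 0 T ×ˢ Icc a (a + L)) :=
    ((contDiffOn_flux hT hε hu).continuousOn.mono (prod_mono_right (subset_univ _))).pow 2
  calc ∫ p in Ioc t₁ t₂ ×ˢ Ioc a (a + c), thinFilmFlux ε u p.1 p.2 ^ 2
      ≤ ∫ p in Ioc 0 T ×ˢ Ioc a (a + L), thinFilmFlux ε u p.1 p.2 ^ 2 :=
        setIntegral_mono_set (integrableOn_Ioc_prod_Ioc hcont) (.of_forall fun _ => sq_nonneg _)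
          (prod_mono (Ioc_subset_Ioc ht₁ ht₂) (Ioc_subset_Ioc_right (by linarith))).eventuallyLE
    _ = ∫ t in (0 : ℝ)..T, ∫ x in a..(a + L), thinFilmFlux ε u t x ^ 2 :=
        (intervalIntegral_intervalIntegral_eq_setIntegral hT.le (by linarith) hcont).symm
    _ = ∫ t in (0 : ℝ)..T, ∫ x in (0 : ℝ)..L, thinFilmFlux ε u t x ^ 2 := by
        refine intervalIntegral.integral_congr fun t _ => ?_
        have hper := (periodic_flux hu t).comp (· ^ 2)
        simpa only [zero_add, Function.comp_apply] using hper.intervalIntegral_add_eq a 0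

theorem abs_sub_le_of_lt (hT : 0 < T) (hε : 0 < ε) (hu : IsRegSol L T lam ε u)
    {C₁ A K α : ℝ} (hL : 0 < L) (hlam : 0 ≤ lam) (hα : 0 ≤ α)
    (hC₁ : ∀ t ∈ Icc 0 T, ∀ x, u t x ≤ C₁)
    (hA : ∫ t in (0 : ℝ)..T, ∫ x in (0 : ℝ)..L, thinFilmFlux ε u t x ^ 2 ≤ A)
    (hK : ∀ t ∈ Icc 0 T, ∀ x₁ x₂, |u t x₁ - u t x₂| ≤ K * |x₁ - x₂| ^ α)
    {t₁ t₂ : ℝ} (ht₁ : 0 ≤ t₁) (ht : t₁ < t₂) (ht₂ : t₂ ≤ T) (x₀ : ℝ) :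
    |u t₂ x₀ - u t₁ x₀| ≤
      timeHolderConst L lam C₁ A K * (t₂ - t₁) ^ (α / (2 * α + 3)) := by
  have hI : Icc t₁ t₂ ⊆ Icc 0 T := Icc_subset_Icc ht₁ ht₂
  have hpos : ∀ t x, 0 < u t x := hu.2.2.1
  have hC : ∀ t ∈ Icc t₁ t₂, ∀ x, u t x ≤ |C₁| := fun t ht x =>
    (hC₁ t (hI ht) x).trans (le_abs_self C₁)
  rcases le_total (t₂ - t₁) 1 with hle | hge
  · refine ((hu.isBalanceLaw hT hε).abs_sub_le_rpow (c := min 1 L) (A := A) (B := |C₁| ^ lam)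
      (K := |K|) hI ht hle (lt_min one_pos hL) (min_le_left 1 L) hα ?_ ?_ ?_).trans ?_
    · exact (hu.setIntegral_flux_sq_le hT hε ht₁ ht₂ (min_le_right 1 L) hL.le).trans hA
    · intro t ht x _
      rw [abs_of_pos (Real.rpow_pos_of_pos (hpos t x) lam)]
      exact Real.rpow_le_rpow (hpos t x).le (hC t ht x) hlam
    · intro t ht x _
      refine (hK t (hI ht) x₀ x).trans ?_
      gcongr
      exact le_abs_self K
    · gcongr
      exact le_add_of_nonneg_right (abs_nonneg C₁)
  · calc |u t₂ x₀ - u t₁ x₀| ≤ |C₁| :=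
          abs_sub_le_of_nonneg_of_le (hpos t₂ x₀).le (hC t₂ (right_mem_Icc.mpr ht.le) x₀)
            (hpos t₁ x₀).le (hC t₁ (left_mem_Icc.mpr ht.le) x₀)
      _ ≤ timeHolderConst L lam C₁ A K := by
          unfold timeHolderConst
          exact le_add_of_nonneg_left (by positivity)
      _ ≤ timeHolderConst L lam C₁ A K * (t₂ - t₁) ^ (α / (2 * α + 3)) :=
          le_mul_of_one_le_right (timeHolderConst_nonneg hL ..)
            (Real.one_le_rpow hge (by positivity))

end IsRegSol

theorem regularized_holder_in_time_general
    (L lam C₁ A K α : ℝ) (hL : 0 < L) (hlam : 0 ≤ lam) (hα : 0 ≤ α) :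
    ∃ M : ℝ, 0 ≤ M ∧
      ∀ T ε : ℝ, 0 < T → 0 < ε → ∀ u : ℝ → ℝ → ℝ,
        IsRegSol L T lam ε u →
        (∀ t ∈ Icc (0 : ℝ) T, ∀ x : ℝ, u t x ≤ C₁) →
        ((∫ t in (0 : ℝ)..T, ∫ x in (0 : ℝ)..L,
            (fe ε (u t x) * iteratedDeriv 3 (u t) x) ^ 2) ≤ A) →
        (∀ t ∈ Icc (0 : ℝ) T, ∀ x₁ x₂ : ℝ, |u t x₁ - u t x₂| ≤ K * |x₁ - x₂| ^ α) →
        ∀ x₀ : ℝ, ∀ t₁ ∈ Icc (0 : ℝ) T, ∀ t₂ ∈ Icc (0 : ℝ) T,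
          |u t₁ x₀ - u t₂ x₀| ≤ M * |t₁ - t₂| ^ (α / (2 * α + 3)) := by
  refine ⟨timeHolderConst L lam C₁ A K, timeHolderConst_nonneg hL .., ?_⟩
  intro T ε hT hε u hu hC₁ hA hK x₀ t₁ ht₁ t₂ ht₂
  have hlt {s t : ℝ} (hs : s ∈ Icc 0 T) (ht : t ∈ Icc 0 T) (hst : s < t) :=
    hu.abs_sub_le_of_lt hT hε hL hlam hα hC₁ hA hK hs.1 hst ht.2 x₀
  rcases lt_trichotomy t₁ t₂ with h | rfl | h
  · rw [abs_sub_comm, abs_sub_comm t₁, abs_of_pos (sub_pos.mpr h)]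
    exact hlt ht₁ ht₂ h
  · rw [sub_self, abs_zero]
    exact mul_nonneg (timeHolderConst_nonneg hL ..) (by positivity)
  · rw [abs_of_pos (sub_pos.mpr h)]
    exact hlt ht₂ ht₁ h

/-- Uniform-in-`ε` Hölder continuity in time (with exponent 1/8) of regularized
solutions satisfying uniform bounds. -/
theorem regularized_holder_in_time
    (L lam C₁ A K : ℝ) (hL : 0 < L) (hlam : 1 ≤ lam) :
    ∃ M : ℝ, 0 ≤ M ∧
      ∀ T ε : ℝ, 0 < T → 0 < ε → ∀ u : ℝ → ℝ → ℝ,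
        IsRegSol L T lam ε u →
        (∀ t ∈ Set.Icc (0 : ℝ) T, ∀ x : ℝ, u t x ≤ C₁) →
        ((∫ t in (0 : ℝ)..T, ∫ x in (0 : ℝ)..L,
            (fe ε (u t x) * iteratedDeriv 3 (u t) x) ^ 2) ≤ A) →
        (∀ t ∈ Set.Icc (0 : ℝ) T, ∀ x₁ x₂ : ℝ,
            |u t x₁ - u t x₂| ≤ K * |x₁ - x₂| ^ ((1 : ℝ) / 2)) →
        ∀ x₀ : ℝ, ∀ t₁ ∈ Set.Icc (0 : ℝ) T, ∀ t₂ ∈ Set.Icc (0 : ℝ) T,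
          |t₁ - t₂| ≤ 1 →
          |u t₁ x₀ - u t₂ x₀| ≤ M * |t₁ - t₂| ^ ((1 : ℝ) / 8) := by
  obtain ⟨M, hM, hbound⟩ := regularized_holder_in_time_general L lam C₁ A K (1 / 2) hL
    (zero_le_one.trans hlam) (by norm_num)
  exact ⟨M, hM, fun T ε hT hε u hu hC₁ hA hK x₀ t₁ ht₁ t₂ ht₂ _ => by
    convert hbound T ε hT hε u hu hC₁ hA hK x₀ t₁ ht₁ t₂ ht₂ using 3
    norm_num⟩

end
end

section
/- Let u be a regularized solution on [0,T]. Then for every t ∈ [0,T] one has the energy identity (1/2) ∫₀^L u_x(t,x)² dx + ∫₀^t ∫₀^L f_ε(u(s,x)) u_xxx(s,x)² dx ds + λ ∫₀^t ∫₀^L u(s,x)^{λ−1} u_x(s,x)² dx ds = (1/2) ∫₀^L u_x(0,x)² dx. In particular t ↦ ∫₀^L u_x(t,x)² dx is nonincreasing. -/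
/-!
At each fixed time, three integrations by parts over a period, with `F = m(u) u_xxx` and the
equation `u_t = -(F_x + g(u))`, give
`∫ u_x u_xt = -∫ u_xx u_t = ∫ u_xx (F_x + g(u)) = -∫ m(u) u_xxx² - ∫ g'(u) u_x²`.
The left-hand side is the time derivative of `½ ∫ u_x²`, so integrating in time yields the energy
identity for any mobility `m` and absorption `g`; the Dirichlet energy decreases when `m ≥ 0` and
`g' ≥ 0`. The regularized equation is the case `m = f_ε`, `g(s) = s^λ` on `s > 0`.
-/

open MeasureTheory Set

noncomputable section

theorem periodic_deriv {E : Type*} [NormedAddCommGroup E] [NormedSpace ℝ E] {f : ℝ → E} {c : ℝ}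
    (hf : Function.Periodic f c) : Function.Periodic (deriv f) c := fun x => by
  rw [← deriv_comp_add_const, hf.funext]

theorem integral_mul_deriv_eq_neg_of_eq_endpoints {f h : ℝ → ℝ} {a b : ℝ}
    (hf : ContDiff ℝ 1 f) (hh : ContDiff ℝ 1 h) (hfab : f b = f a) (hhab : h b = h a) :
    ∫ x in a..b, f x * deriv h x = -∫ x in a..b, deriv f x * h x := by
  rw [intervalIntegral.integral_mul_deriv_eq_deriv_mul
    (fun x _ => (hf.differentiable one_ne_zero x).hasDerivAt)
    (fun x _ => (hh.differentiable one_ne_zero x).hasDerivAt)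
    (hf.continuous_deriv_one.intervalIntegrable _ _)
    (hh.continuous_deriv_one.intervalIntegrable _ _), hfab, hhab, sub_self, zero_sub]

section Slices

variable {E : Type*} [NormedAddCommGroup E] [NormedSpace ℝ E] {S : Set ℝ} {t : ℝ}

theorem hasDerivAt_comp_prodMk_right {f : ℝ × ℝ → E} {x : ℝ} (ht : t ∈ S)
    (hf : DifferentiableWithinAt ℝ f (S ×ˢ univ) (t, x)) :
    HasDerivAt (fun y => f (t, y)) (fderivWithin ℝ f (S ×ˢ univ) (t, x) (0, 1)) x := by
  have hline : HasDerivWithinAt (fun y : ℝ => (t, y)) (0, 1) univ x :=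
    (hasDerivWithinAt_const x univ t).prodMk (hasDerivWithinAt_id x univ)
  rw [← hasDerivWithinAt_univ]
  exact hf.hasFDerivWithinAt.comp_hasDerivWithinAt x hline fun y _ => ⟨ht, mem_univ y⟩

theorem hasDerivWithinAt_comp_prodMk_left {f : ℝ × ℝ → E} {x : ℝ}
    (hf : DifferentiableWithinAt ℝ f (S ×ˢ univ) (t, x)) :
    HasDerivWithinAt (fun s => f (s, x)) (fderivWithin ℝ f (S ×ˢ univ) (t, x) (1, 0)) S t := by
  have hline : HasDerivWithinAt (fun s : ℝ => (s, x)) (1, 0) S t :=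
    (hasDerivWithinAt_id t S).prodMk (hasDerivWithinAt_const t S x)
  exact hf.hasFDerivWithinAt.comp_hasDerivWithinAt t hline fun s hs =>
    mk_mem_prod hs (mem_univ x)

theorem contDiff_of_contDiffOn_uncurry {u : ℝ → ℝ → E} {n : WithTop ℕ∞}
    (hu : ContDiffOn ℝ n u.uncurry (S ×ˢ univ)) (ht : t ∈ S) : ContDiff ℝ n (u t) :=
  hu.comp_contDiff (f := fun x => (t, x)) (contDiff_prodMk_right t) fun x => ⟨ht, mem_univ x⟩

theorem contDiffOn_uncurry_deriv (hS : UniqueDiffOn ℝ S) {u : ℝ → ℝ → E} {m n : WithTop ℕ∞}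
    (hu : ContDiffOn ℝ n u.uncurry (S ×ˢ univ)) (hmn : m + 1 ≤ n) :
    ContDiffOn ℝ m (Function.uncurry fun t => deriv (u t)) (S ×ˢ univ) := by
  have hn : n ≠ 0 := (zero_lt_one.trans_le (le_add_self.trans hmn)).ne'
  refine ((hu.fderivWithin (hS.prod uniqueDiffOn_univ) hmn).clm_apply
    (contDiffOn_const (c := ((0, 1) : ℝ × ℝ)))).congr fun p hp => ?_
  exact (hasDerivAt_comp_prodMk_right hp.1 (hu.differentiableOn hn p hp)).deriv

theorem contDiffOn_uncurry_iteratedDeriv (hS : UniqueDiffOn ℝ S) {u : ℝ → ℝ → E} {k : ℕ} :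
    ∀ {m n : WithTop ℕ∞}, ContDiffOn ℝ n u.uncurry (S ×ˢ univ) → m + k ≤ n →
      ContDiffOn ℝ m (Function.uncurry fun t => iteratedDeriv k (u t)) (S ×ˢ univ) := by
  induction k with
  | zero =>
    intro m n hu hmn
    simpa only [iteratedDeriv_zero] using hu.of_le (by simpa using hmn)
  | succ k ih =>
    intro m n hu hmn
    simp only [iteratedDeriv_succ]
    have hmn' : m + 1 + k ≤ n := by rwa [add_assoc, add_comm 1, ← Nat.cast_add_one]
    exact contDiffOn_uncurry_deriv hS (ih hu hmn') le_rfl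

/-- The time derivative `u_t(t,x)` within the set of times `S`; it is one-sided at an endpoint of an
interval `S`. -/
def timeDeriv (S : Set ℝ) (u : ℝ → ℝ → E) (t x : ℝ) : E := derivWithin (fun s => u s x) S t

theorem hasDerivWithinAt_timeDeriv {u : ℝ → ℝ → E} (hu : ContDiffOn ℝ 1 u.uncurry (S ×ˢ univ))
    (ht : t ∈ S) (x : ℝ) : HasDerivWithinAt (fun s => u s x) (timeDeriv S u t x) S t :=
  (hasDerivWithinAt_comp_prodMk_left (hu.differentiableOn one_ne_zero (t, x) ⟨ht, mem_univ x⟩)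
    ).differentiableWithinAt.hasDerivWithinAt

theorem contDiffOn_uncurry_timeDeriv (hS : UniqueDiffOn ℝ S) {u : ℝ → ℝ → E} {m n : WithTop ℕ∞}
    (hu : ContDiffOn ℝ n u.uncurry (S ×ˢ univ)) (hmn : m + 1 ≤ n) :
    ContDiffOn ℝ m (timeDeriv S u).uncurry (S ×ˢ univ) := by
  have hn : n ≠ 0 := (zero_lt_one.trans_le (le_add_self.trans hmn)).ne'
  refine ((hu.fderivWithin (hS.prod uniqueDiffOn_univ) hmn).clm_apply
    (contDiffOn_const (c := ((1, 0) : ℝ × ℝ)))).congr fun p hp => ?_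
  exact (hasDerivWithinAt_comp_prodMk_left (hu.differentiableOn hn p hp)).derivWithin (hS _ hp.1)

theorem timeDeriv_deriv_eq_deriv_timeDeriv (hS : Convex ℝ S) (hSint : (interior S).Nonempty)
    {u : ℝ → ℝ → E} (hu : ContDiffOn ℝ 2 u.uncurry (S ×ˢ univ)) (ht : t ∈ S) (x : ℝ) :
    timeDeriv S (fun s => deriv (u s)) t x = deriv (timeDeriv S u t) x := by
  have hSd : UniqueDiffOn ℝ S := uniqueDiffOn_convex hS hSint
  have hstrip : UniqueDiffOn ℝ (S ×ˢ (univ : Set ℝ)) := hSd.prod uniqueDiffOn_univ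
  have hmem (s : ℝ) (hs : s ∈ S) (y : ℝ) : (s, y) ∈ S ×ˢ univ := ⟨hs, mem_univ y⟩
  have hdiff := hu.differentiableOn two_ne_zero
  have hfderiv := (hu.fderivWithin hstrip one_add_one_eq_two.le).differentiableOn one_ne_zero
    (t, x) (hmem t ht x)
  have hclosure : (t, x) ∈ closure (interior (S ×ˢ univ)) := by
    rw [interior_prod_eq, closure_prod_eq, interior_univ, closure_univ,
      hS.closure_interior_eq_closure_of_nonempty_interior hSint]
    exact ⟨subset_closure ht, mem_univ x⟩
  have hsymm := (hu (t, x) (hmem t ht x)).isSymmSndFDerivWithinAt (by simp) hstrip hclosure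
    (hmem t ht x)
  have hxt : HasDerivWithinAt (fun s => deriv (u s) x)
      (fderivWithin ℝ (fderivWithin ℝ u.uncurry (S ×ˢ univ)) (S ×ˢ univ) (t, x) (1, 0) (0, 1))
      S t := by
    refine (((hasDerivWithinAt_comp_prodMk_left hfderiv).clm_apply
      (hasDerivWithinAt_const t S (0, 1))).congr_deriv (by simp)).congr_of_mem (fun s hs => ?_) ht
    exact (hasDerivAt_comp_prodMk_right hs (hdiff _ (hmem s hs x))).deriv
  have htx : HasDerivAt (timeDeriv S u t)
      (fderivWithin ℝ (fderivWithin ℝ u.uncurry (S ×ˢ univ)) (S ×ˢ univ) (t, x) (0, 1) (1, 0))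
      x := by
    refine (((hasDerivAt_comp_prodMk_right ht hfderiv).clm_apply
      (hasDerivAt_const x (1, 0))).congr_deriv (by simp)).congr_of_eventuallyEq (.of_forall ?_)
    exact fun y =>
      (hasDerivWithinAt_comp_prodMk_left (hdiff _ (hmem t ht y))).derivWithin (hSd t ht)
  rw [timeDeriv, hxt.derivWithin (hSd t ht), htx.deriv, hsymm.eq]

theorem continuousOn_intervalIntegral_of_continuousOn_uncurry {f : ℝ → ℝ → E}
    (hf : ContinuousOn f.uncurry (S ×ˢ univ)) (a b : ℝ) :
    ContinuousOn (fun s => ∫ x in a..b, f s x) S := by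
  rw [continuousOn_iff_continuous_domRestrict]
  have hrestrict : Continuous (Function.uncurry fun s : S => f s) :=
    hf.comp_continuous (f := fun p : S × ℝ => ((p.1 : ℝ), p.2)) (by fun_prop)
      fun p => ⟨p.1.2, mem_univ p.2⟩
  exact intervalIntegral.continuous_parametric_intervalIntegral_of_continuous' hrestrict a b

theorem integral_sub_integral_eq_integral_timeDeriv [CompleteSpace E] (hS : S.OrdConnected)
    (hSd : UniqueDiffOn ℝ S) {u : ℝ → ℝ → E} (hu : ContDiffOn ℝ 1 u.uncurry (S ×ˢ univ))
    {t₁ t₂ : ℝ} (h₁ : t₁ ∈ S) (h₂ : t₂ ∈ S) (a b : ℝ) :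
    (∫ x in a..b, u t₂ x) - ∫ x in a..b, u t₁ x
      = ∫ s in t₁..t₂, ∫ x in a..b, timeDeriv S u s x := by
  have hsub : uIcc t₁ t₂ ⊆ S := hS.uIcc_subset h₁ h₂
  have hut : ContinuousOn (timeDeriv S u).uncurry (S ×ˢ univ) :=
    (contDiffOn_uncurry_timeDeriv hSd hu (zero_add 1).le).continuousOn
  have hftc (x : ℝ) : ∫ s in t₁..t₂, timeDeriv S u s x = u t₂ x - u t₁ x := by
    refine intervalIntegral.integral_eq_sub_of_hasDeriv_right
      ((hu.continuousOn.uncurry_right x (mem_univ x)).mono hsub) (fun s hs => ?_)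
      ((hut.uncurry_right x (mem_univ x)).mono hsub).intervalIntegrable
    have hnhds : S ∈ nhds s :=
      Filter.mem_of_superset (Ioo_mem_nhds hs.1 hs.2) (Ioo_subset_Icc_self.trans hsub)
    exact ((hasDerivWithinAt_timeDeriv hu (mem_of_mem_nhds hnhds) x).hasDerivAt
      hnhds).hasDerivWithinAt
  have hint {t : ℝ} (ht : t ∈ S) : IntervalIntegrable (u t) volume a b :=
    (contDiff_of_contDiffOn_uncurry hu ht).continuous.intervalIntegrable a b
  rw [← intervalIntegral.integral_sub (hint h₂) (hint h₁), intervalIntegral_intervalIntegral_swap]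
  · simp only [hftc]
  · exact ((hut.mono (prod_mono hsub (subset_univ _))).integrableOn_compact
      (isCompact_uIcc.prod isCompact_uIcc)).mono_set (prod_mono uIoc_subset_uIcc uIoc_subset_uIcc)

end Slices

theorem half_integral_sq_sub_half_integral_sq {S : Set ℝ} (hS : S.OrdConnected)
    (hSd : UniqueDiffOn ℝ S) {v : ℝ → ℝ → ℝ} (hv : ContDiffOn ℝ 1 v.uncurry (S ×ˢ univ))
    {t₁ t₂ : ℝ} (h₁ : t₁ ∈ S) (h₂ : t₂ ∈ S) (a b : ℝ) :
    1 / 2 * (∫ x in a..b, v t₂ x ^ 2) - 1 / 2 * ∫ x in a..b, v t₁ x ^ 2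
      = ∫ s in t₁..t₂, ∫ x in a..b, v s x * timeDeriv S v s x := by
  have hsq : ContDiffOn ℝ 1 (Function.uncurry fun s x => 1 / 2 * v s x ^ 2) (S ×ˢ univ) :=
    contDiffOn_const.mul (hv.pow 2)
  have hsqt {s : ℝ} (hs : s ∈ S) (x : ℝ) :
      timeDeriv S (fun s x => 1 / 2 * v s x ^ 2) s x = v s x * timeDeriv S v s x := by
    refine HasDerivWithinAt.derivWithin ?_ (hSd s hs)
    refine (((hasDerivWithinAt_timeDeriv hv hs x).pow 2).const_mul (1 / 2)).congr_deriv ?_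
    rw [Nat.cast_ofNat, pow_one]
    ring
  simp only [← intervalIntegral.integral_const_mul]
  rw [integral_sub_integral_eq_integral_timeDeriv hS hSd hsq h₁ h₂]
  refine intervalIntegral.integral_congr fun s hs => ?_
  simp only [hsqt (hS.uIcc_subset h₁ h₂ hs)]

theorem contDiff_one_comp_of_hasDerivAt {I : Set ℝ} {g g' v : ℝ → ℝ}
    (hg : ∀ s ∈ I, HasDerivAt g (g' s) s) (hg' : ContinuousOn g' I) (hv : ContDiff ℝ 1 v)
    (hvI : ∀ x, v x ∈ I) : ContDiff ℝ 1 fun x => g (v x) := by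
  have hcomp (x : ℝ) : HasDerivAt (fun y => g (v y)) (g' (v x) * deriv v x) x :=
    (hg _ (hvI x)).comp x (hv.differentiable one_ne_zero x).hasDerivAt
  refine contDiff_one_iff_deriv.2 ⟨fun x => (hcomp x).differentiableAt, ?_⟩
  rw [funext fun x => (hcomp x).deriv]
  exact (hg'.comp_continuous hv.continuous hvI).mul hv.continuous_deriv_one

theorem integral_deriv_mul_deriv_of_add_deriv_add_eq_zero {L : ℝ} {v w F G : ℝ → ℝ}
    (hv : ContDiff ℝ 3 v) (hw : ContDiff ℝ 1 w) (hF : ContDiff ℝ 1 F) (hG : ContDiff ℝ 1 G)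
    (hvL : Function.Periodic v L) (hwL : Function.Periodic w L) (hFL : Function.Periodic F L)
    (hGL : Function.Periodic G L) (heq : ∀ x, w x + deriv F x + G x = 0) :
    ∫ x in (0 : ℝ)..L, deriv v x * deriv w x
      = -((∫ x in (0 : ℝ)..L, deriv (deriv (deriv v)) x * F x)
        + ∫ x in (0 : ℝ)..L, deriv G x * deriv v x) := by
  have hv₁ : ContDiff ℝ 1 (deriv v) := ContDiff.iterate_deriv' 1 1 (hv.of_le (by norm_num))
  have hv₂ : ContDiff ℝ 1 (deriv (deriv v)) := ContDiff.iterate_deriv' 1 2 hv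
  have hv₁L := periodic_deriv hvL
  have hv₂L := periodic_deriv hv₁L
  calc ∫ x in (0 : ℝ)..L, deriv v x * deriv w x
      = -∫ x in (0 : ℝ)..L, deriv (deriv v) x * w x :=
        integral_mul_deriv_eq_neg_of_eq_endpoints hv₁ hw hv₁L.eq hwL.eq
    _ = ∫ x in (0 : ℝ)..L, (deriv (deriv v) x * deriv F x + G x * deriv (deriv v) x) := by
        rw [← intervalIntegral.integral_neg]
        congr! 2 with x
        linear_combination -deriv (deriv v) x * heq x
    _ = (∫ x in (0 : ℝ)..L, deriv (deriv v) x * deriv F x)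
          + ∫ x in (0 : ℝ)..L, G x * deriv (deriv v) x :=
        intervalIntegral.integral_add
          ((hv₂.continuous.mul hF.continuous_deriv_one).intervalIntegrable _ _)
          ((hG.continuous.mul hv₂.continuous).intervalIntegrable _ _)
    _ = -((∫ x in (0 : ℝ)..L, deriv (deriv (deriv v)) x * F x)
          + ∫ x in (0 : ℝ)..L, deriv G x * deriv v x) := by
        rw [integral_mul_deriv_eq_neg_of_eq_endpoints hv₂ hF hv₂L.eq hFL.eq,
          integral_mul_deriv_eq_neg_of_eq_endpoints hG hv₁ hGL.eq hv₁L.eq, neg_add]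

/-- The regularity, on the set `I` of admissible values, of a mobility `m` and of an absorption `g`
with derivative `g'` under which the energy identity of the thin-film equation holds. -/
structure RegularCoefficients (I : Set ℝ) (m g g' : ℝ → ℝ) : Prop where
  differentiableAt_mobility : ∀ s ∈ I, DifferentiableAt ℝ m s
  hasDerivAt_absorption : ∀ s ∈ I, HasDerivAt g (g' s) s
  continuousOn_absorption_deriv : ContinuousOn g' I

theorem integral_deriv_mul_deriv_eq_neg_dissipation {L : ℝ} {I : Set ℝ} {m g g' v w : ℝ → ℝ}
    (hmg : RegularCoefficients I m g g') (hv : ContDiff ℝ 4 v) (hw : ContDiff ℝ 1 w)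
    (hvL : Function.Periodic v L) (hwL : Function.Periodic w L) (hvI : ∀ x, v x ∈ I)
    (heq : ∀ x, w x + deriv (fun y => m (v y) * iteratedDeriv 3 v y) x + g (v x) = 0) :
    ∫ x in (0 : ℝ)..L, deriv v x * deriv w x
      = -((∫ x in (0 : ℝ)..L, m (v x) * iteratedDeriv 3 v x ^ 2)
        + ∫ x in (0 : ℝ)..L, g' (v x) * deriv v x ^ 2) := by
  have hthird : iteratedDeriv 3 v = deriv (deriv (deriv v)) := by
    rw [iteratedDeriv_eq_iterate]
    rfl
  rw [hthird] at heq ⊢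
  have hv₃ : ContDiff ℝ 1 (deriv (deriv (deriv v))) := ContDiff.iterate_deriv' 1 3 hv
  have hvd : Differentiable ℝ v := hv.differentiable (by norm_num)
  have hG : ContDiff ℝ 1 fun x => g (v x) := contDiff_one_comp_of_hasDerivAt
    hmg.hasDerivAt_absorption hmg.continuousOn_absorption_deriv (hv.of_le (by norm_num)) hvI
  have hGderiv (x : ℝ) : deriv (fun y => g (v y)) x = g' (v x) * deriv v x :=
    ((hmg.hasDerivAt_absorption _ (hvI x)).comp x (hvd x).hasDerivAt).deriv
  -- `deriv m` may be discontinuous, but the equation makes the derivative of the flux continuous.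
  have hF : ContDiff ℝ 1 fun x => m (v x) * deriv (deriv (deriv v)) x := by
    refine contDiff_one_iff_deriv.2 ⟨fun x => ?_, ?_⟩
    · exact ((hmg.differentiableAt_mobility _ (hvI x)).comp x (hvd x)).mul
        (hv₃.differentiable one_ne_zero x)
    · have hcont : Continuous fun x => -(w x + g (v x)) := (hw.continuous.add hG.continuous).neg
      exact hcont.congr fun x => by linarith [heq x]
  have hFL : Function.Periodic (fun x => m (v x) * deriv (deriv (deriv v)) x) L :=
    (hvL.comp m).mul (periodic_deriv (periodic_deriv (periodic_deriv hvL)))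
  rw [integral_deriv_mul_deriv_of_add_deriv_add_eq_zero (hv.of_le (by norm_num)) hw hF hG hvL hwL
    hFL (hvL.comp g) heq]
  congr! 4 with x x
  · ring
  · rw [hGderiv]
    ring

/-- A classical solution, `L`-periodic in `x` and with values in `I`, of the thin-film equation
`u_t + ∂_x(m(u) u_xxx) + g(u) = 0` with mobility `m` and absorption `g`, for times in `S`. -/
structure IsThinFilmSol (S : Set ℝ) (L : ℝ) (I : Set ℝ) (m g : ℝ → ℝ) (u : ℝ → ℝ → ℝ) : Prop where
  contDiffOn : ContDiffOn ℝ 4 u.uncurry (S ×ˢ univ)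
  periodic : ∀ t ∈ S, Function.Periodic (u t) L
  mem : ∀ t ∈ S, ∀ x, u t x ∈ I
  equation : ∀ t ∈ S, ∀ x,
    timeDeriv S u t x + deriv (fun y => m (u t y) * iteratedDeriv 3 (u t) y) x + g (u t x) = 0

namespace IsThinFilmSol

variable {S I : Set ℝ} {L : ℝ} {m g g' : ℝ → ℝ} {u : ℝ → ℝ → ℝ}

theorem integral_deriv_mul_timeDeriv_deriv (hu : IsThinFilmSol S L I m g u) (hS : Convex ℝ S)
    (hSint : (interior S).Nonempty) (hmg : RegularCoefficients I m g g') {t : ℝ} (ht : t ∈ S) :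
    ∫ x in (0 : ℝ)..L, deriv (u t) x * timeDeriv S (fun s => deriv (u s)) t x
      = -((∫ x in (0 : ℝ)..L, m (u t x) * iteratedDeriv 3 (u t) x ^ 2)
        + ∫ x in (0 : ℝ)..L, g' (u t x) * deriv (u t) x ^ 2) := by
  have hut : ContDiffOn ℝ 1 (timeDeriv S u).uncurry (S ×ˢ univ) :=
    contDiffOn_uncurry_timeDeriv (uniqueDiffOn_convex hS hSint) hu.contDiffOn (by norm_num)
  have hutL : Function.Periodic (timeDeriv S u t) L := fun x =>
    derivWithin_congr (fun s hs => hu.periodic s hs x) (hu.periodic t ht x)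
  simp only [timeDeriv_deriv_eq_deriv_timeDeriv hS hSint (hu.contDiffOn.of_le (by norm_num)) ht]
  exact integral_deriv_mul_deriv_eq_neg_dissipation hmg
    (contDiff_of_contDiffOn_uncurry hu.contDiffOn ht) (contDiff_of_contDiffOn_uncurry hut ht)
    (hu.periodic t ht) hutL (hu.mem t ht) (hu.equation t ht)

theorem continuousOn_integral_comp_mul_iteratedDeriv_sq (hu : IsThinFilmSol S L I m g u)
    (hS : UniqueDiffOn ℝ S) {φ : ℝ → ℝ} (hφ : ContinuousOn φ I) {k : ℕ} (hk : k ≤ 4) (a b : ℝ) :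
    ContinuousOn (fun t => ∫ x in a..b, φ (u t x) * iteratedDeriv k (u t) x ^ 2) S := by
  have hk' : (0 : WithTop ℕ∞) + k ≤ 4 := by
    rw [zero_add]
    exact_mod_cast hk
  have hφu : ContinuousOn (fun p : ℝ × ℝ => φ (u p.1 p.2)) (S ×ˢ univ) :=
    hφ.comp hu.contDiffOn.continuousOn fun p hp => hu.mem p.1 hp.1 p.2
  have hintegrand : ContinuousOn
      (Function.uncurry fun t x => φ (u t x) * iteratedDeriv k (u t) x ^ 2) (S ×ˢ univ) :=
    hφu.fun_mul ((contDiffOn_uncurry_iteratedDeriv hS hu.contDiffOn hk').continuousOn.fun_pow 2)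
  exact continuousOn_intervalIntegral_of_continuousOn_uncurry hintegrand a b

theorem energy_identity (hu : IsThinFilmSol S L I m g u) (hS : Convex ℝ S)
    (hSint : (interior S).Nonempty) (hmg : RegularCoefficients I m g g')
    {t₁ t₂ : ℝ} (h₁ : t₁ ∈ S) (h₂ : t₂ ∈ S) :
    1 / 2 * (∫ x in (0 : ℝ)..L, deriv (u t₂) x ^ 2)
        + (∫ s in t₁..t₂, ∫ x in (0 : ℝ)..L, m (u s x) * iteratedDeriv 3 (u s) x ^ 2)
        + ∫ s in t₁..t₂, ∫ x in (0 : ℝ)..L, g' (u s x) * deriv (u s) x ^ 2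
      = 1 / 2 * ∫ x in (0 : ℝ)..L, deriv (u t₁) x ^ 2 := by
  have hSd := uniqueDiffOn_convex hS hSint
  have hsub : uIcc t₁ t₂ ⊆ S := hS.ordConnected.uIcc_subset h₁ h₂
  have hmc : ContinuousOn m I := fun s hs =>
    (hmg.differentiableAt_mobility s hs).continuousAt.continuousWithinAt
  have hmobility := hu.continuousOn_integral_comp_mul_iteratedDeriv_sq hSd hmc
    (k := 3) (by norm_num) 0 L
  have habsorption := hu.continuousOn_integral_comp_mul_iteratedDeriv_sq hSd
    hmg.continuousOn_absorption_deriv (k := 1) (by norm_num) 0 L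
  simp only [iteratedDeriv_one] at habsorption
  have hchange := half_integral_sq_sub_half_integral_sq hS.ordConnected hSd
    (contDiffOn_uncurry_deriv hSd hu.contDiffOn (by norm_num)) h₁ h₂ 0 L
  rw [intervalIntegral.integral_congr fun s hs =>
      hu.integral_deriv_mul_timeDeriv_deriv hS hSint hmg (hsub hs),
    intervalIntegral.integral_neg,
    intervalIntegral.integral_add (hmobility.mono hsub).intervalIntegrable
      (habsorption.mono hsub).intervalIntegrable] at hchange
  linarith

theorem antitoneOn_integral_deriv_sq (hu : IsThinFilmSol S L I m g u) (hS : Convex ℝ S)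
    (hSint : (interior S).Nonempty) (hmg : RegularCoefficients I m g g') (hL : 0 ≤ L)
    (hm_nonneg : ∀ s ∈ I, 0 ≤ m s) (hg'_nonneg : ∀ s ∈ I, 0 ≤ g' s) :
    AntitoneOn (fun t => ∫ x in (0 : ℝ)..L, deriv (u t) x ^ 2) S := by
  intro t₁ h₁ t₂ h₂ h₁₂
  have hdissipation {φ : ℝ → ℝ} (hφ : ∀ s ∈ I, 0 ≤ φ s) (f : ℝ → ℝ → ℝ) :
      0 ≤ ∫ s in t₁..t₂, ∫ x in (0 : ℝ)..L, φ (u s x) * f s x ^ 2 :=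
    intervalIntegral.integral_nonneg h₁₂ fun s hs => intervalIntegral.integral_nonneg hL fun x _ =>
      mul_nonneg (hφ _ (hu.mem s (hS.ordConnected.out h₁ h₂ hs) x)) (sq_nonneg _)
  have hidentity := hu.energy_identity hS hSint hmg h₁ h₂
  have hmobility := hdissipation hm_nonneg fun s => iteratedDeriv 3 (u s)
  have habsorption := hdissipation hg'_nonneg fun s => deriv (u s)
  dsimp only
  linarith

end IsThinFilmSol

theorem regularized_energy_identity_general {S I : Set ℝ} {L : ℝ} {m g g' : ℝ → ℝ}
    {u : ℝ → ℝ → ℝ} (hL : 0 ≤ L) (hS : Convex ℝ S) (hSint : (interior S).Nonempty)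
    (hmg : RegularCoefficients I m g g') (hm_nonneg : ∀ s ∈ I, 0 ≤ m s)
    (hg'_nonneg : ∀ s ∈ I, 0 ≤ g' s) (hu : IsThinFilmSol S L I m g u) :
    (∀ t₁ ∈ S, ∀ t₂ ∈ S,
      1 / 2 * (∫ x in (0 : ℝ)..L, deriv (u t₂) x ^ 2)
          + (∫ s in t₁..t₂, ∫ x in (0 : ℝ)..L, m (u s x) * iteratedDeriv 3 (u s) x ^ 2)
          + ∫ s in t₁..t₂, ∫ x in (0 : ℝ)..L, g' (u s x) * deriv (u s) x ^ 2
        = 1 / 2 * ∫ x in (0 : ℝ)..L, deriv (u t₁) x ^ 2) ∧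
    AntitoneOn (fun t => ∫ x in (0 : ℝ)..L, deriv (u t) x ^ 2) S :=
  ⟨fun _ h₁ _ h₂ => hu.energy_identity hS hSint hmg h₁ h₂,
    hu.antitoneOn_integral_deriv_sq hS hSint hmg hL hm_nonneg hg'_nonneg⟩

theorem fe_nonneg {ε : ℝ} (hε : 0 ≤ ε) (s : ℝ) : 0 ≤ fe ε s := by
  unfold fe
  positivity

theorem differentiableAt_fe {ε s : ℝ} (hs : ε + s ^ 2 ≠ 0) : DifferentiableAt ℝ (fe ε) s := by
  unfold fe
  fun_prop (disch := assumption)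

theorem regularCoefficients_fe_rpow {ε lam : ℝ} (hε : 0 ≤ ε) :
    RegularCoefficients (Ioi 0) (fe ε) (· ^ lam) fun s => lam * s ^ (lam - 1) where
  differentiableAt_mobility _ hs :=
    differentiableAt_fe (add_pos_of_nonneg_of_pos hε (pow_pos hs 2)).ne'
  hasDerivAt_absorption _ hs := Real.hasDerivAt_rpow_const (.inl hs.ne')
  continuousOn_absorption_deriv :=
    continuousOn_const.mul (continuousOn_id.rpow_const fun _ hs => .inl hs.ne')

theorem IsRegSol.isThinFilmSol {L T lam ε : ℝ} {u : ℝ → ℝ → ℝ} (hu : IsRegSol L T lam ε u) :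
    IsThinFilmSol (Icc 0 T) L (Ioi 0) (fe ε) (· ^ lam) u where
  contDiffOn := hu.1.of_le (WithTop.coe_le_coe.2 (le_top : (4 : ℕ∞) ≤ ⊤))
  periodic t _ := hu.2.1 t
  mem t _ := hu.2.2.1 t
  equation := hu.2.2.2

/-- Energy identity for regularized solutions; in particular the Dirichlet energy
`t ↦ ∫₀^L u_x(t,x)² dx` is nonincreasing. -/
theorem regularized_energy_identity
    (L T lam ε : ℝ) (hL : 0 < L) (hT : 0 < T) (hlam : 1 ≤ lam) (hε : 0 < ε)
    (u : ℝ → ℝ → ℝ) (hu : IsRegSol L T lam ε u) :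
    (∀ t ∈ Set.Icc (0 : ℝ) T,
      (1 / 2) * (∫ x in (0 : ℝ)..L, (deriv (u t) x) ^ 2)
        + (∫ s in (0 : ℝ)..t, ∫ x in (0 : ℝ)..L,
            fe ε (u s x) * (iteratedDeriv 3 (u s) x) ^ 2)
        + lam * ∫ s in (0 : ℝ)..t, ∫ x in (0 : ℝ)..L,
            (u s x) ^ (lam - 1) * (deriv (u s) x) ^ 2
      = (1 / 2) * ∫ x in (0 : ℝ)..L, (deriv (u 0) x) ^ 2) ∧
    (∀ t₁ ∈ Set.Icc (0 : ℝ) T, ∀ t₂ ∈ Set.Icc (0 : ℝ) T, t₁ ≤ t₂ →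
      (∫ x in (0 : ℝ)..L, (deriv (u t₂) x) ^ 2)
        ≤ ∫ x in (0 : ℝ)..L, (deriv (u t₁) x) ^ 2) := by
  obtain ⟨hidentity, hantitone⟩ := regularized_energy_identity_general hL.le (convex_Icc 0 T)
    (by simpa using hT) (regularCoefficients_fe_rpow hε.le) (fun s _ => fe_nonneg hε.le s)
    (fun s hs => mul_nonneg (by linarith) (Real.rpow_nonneg hs.le _)) hu.isThinFilmSol
  refine ⟨fun t ht => ?_, fun t₁ h₁ t₂ h₂ h₁₂ => hantitone h₁ h₂ h₁₂⟩
  simpa only [mul_assoc, intervalIntegral.integral_const_mul]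
    using hidentity 0 (left_mem_Icc.2 hT.le) t ht

end
end
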